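/- Let f : Λ(n)³ → ℤ satisfy the Duistermaat axioms, let L₁, L₂, L₃ be Lagrangian planes with frames (X_j, Y_j) (j = 1,2,3), and let ε ∈ ℝ be such that X_j + εY_j is invertible for j = 1,2,3. Setting R_j^ε := Y_j (X_j + εY_j)^{−1}, one has f(L₁, L₂, L₃) = n_−(R₂^ε − R₁^ε) − n_−(R₃^ε − R₁^ε) + n_−(R₃^ε − R₂^ε). -/

import Mathlib

/-!
The shear `(x, y) ↦ (x + εy, y)` is symplectic and carries `Lⱼ` to the graph of its Robin map
`Rⱼ`, so by invariance `f(L₁, L₂, L₃) = f(G_{R₁}, G_{R₂}, G_{R₃})`. The cocycle identity with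
fourth plane `G_∞` splits the latter into three terms of the form `± f(G_A, G_B, G_∞)`. The shear
`(x, y) ↦ (x, y - Ax)` fixes `G_∞` and sends `G_A`, `G_B` to `G_0`, `G_{B-A}`, so invariance and
normalization give `f(G_A, G_B, G_∞) = n₋(B - A)` (`dui_graph_graph_vert`).
-/

open Matrix

/-- The Hermitian symplectic space `ℂⁿ ⊕ ℂⁿ`. -/
abbrev SympSpace (n : ℕ) := (Fin n → ℂ) × (Fin n → ℂ)

/-- The symplectic form `ω((x₁,x₂),(y₁,y₂)) = ⟨x₁,y₂⟩ − ⟨x₂,y₁⟩`. -/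
noncomputable def omegaForm {n : ℕ} (u v : SympSpace n) : ℂ :=
  star u.1 ⬝ᵥ v.2 - star u.2 ⬝ᵥ v.1

/-- A subspace is Lagrangian iff it coincides with its symplectic complement. -/
def IsLagrangian {n : ℕ} (L : Submodule ℂ (SympSpace n)) : Prop :=
  ∀ v, v ∈ L ↔ ∀ u ∈ L, omegaForm u v = 0

/-- The Lagrangian Grassmannian `Λ(n)`. -/
abbrev LagGr (n : ℕ) := {L : Submodule ℂ (SympSpace n) // IsLagrangian L}

/-- The graph `G_M = {(x, Mx)}` of a matrix `M`. -/
noncomputable def graphOf {n : ℕ} (M : Matrix (Fin n) (Fin n) ℂ) :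
    Submodule ℂ (SympSpace n) := LinearMap.graph M.mulVecLin

/-- The vertical subspace `G_∞ = 0 ⊕ ℂⁿ`. -/
noncomputable def vertSub (n : ℕ) : Submodule ℂ (SympSpace n) :=
  (⊥ : Submodule ℂ (Fin n → ℂ)).prod (⊤ : Submodule ℂ (Fin n → ℂ))

/-- The negative index (Morse index) of a sesquilinear form: the maximal dimension of a
subspace on which it is negative definite. -/
noncomputable def formNegIdx {V : Type*} [AddCommGroup V] [Module ℂ V]
    (Q : V → V → ℂ) : ℕ :=
  sSup {d : ℕ | ∃ W : Submodule ℂ V, Module.finrank ℂ W = d ∧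
    ∀ x ∈ W, x ≠ 0 → (Q x x).re < 0}

/-- The number of negative eigenvalues (Morse index) of a Hermitian matrix, as the
maximal dimension of a subspace on which the associated form is negative definite. -/
noncomputable def negIdxM {n : ℕ} (A : Matrix (Fin n) (Fin n) ℂ) : ℕ :=
  formNegIdx (fun x y : Fin n → ℂ => star x ⬝ᵥ A.mulVec y)

/-- A symplectic transformation: a bijective linear map preserving `ω`. -/
def IsSymplecticMap {n : ℕ} (S : SympSpace n ≃ₗ[ℂ] SympSpace n) : Prop :=
  ∀ u v, omegaForm (S u) (S v) = omegaForm u v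

/-- The Duistermaat axioms for `f : Λ(n)³ → ℤ`: normalization, symplectic invariance
and the cocycle property. -/
def SatisfiesDuiAxioms {n : ℕ} (f : LagGr n → LagGr n → LagGr n → ℤ) : Prop :=
  (∀ (A : Matrix (Fin n) (Fin n) ℂ), A.IsHermitian →
    ∀ L₁ L₂ L₃ : LagGr n,
      L₁.val = graphOf (0 : Matrix (Fin n) (Fin n) ℂ) →
      L₂.val = graphOf A → L₃.val = vertSub n →
      f L₁ L₂ L₃ = negIdxM A) ∧
  (∀ S : SympSpace n ≃ₗ[ℂ] SympSpace n, IsSymplecticMap S →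
    ∀ L₁ L₂ L₃ M₁ M₂ M₃ : LagGr n,
      M₁.val = (L₁.val).map S.toLinearMap →
      M₂.val = (L₂.val).map S.toLinearMap →
      M₃.val = (L₃.val).map S.toLinearMap →
      f M₁ M₂ M₃ = f L₁ L₂ L₃) ∧
  (∀ L₁ L₂ L₃ L₄ : LagGr n,
    f L₁ L₂ L₃ - f L₁ L₂ L₄ + f L₁ L₃ L₄ - f L₂ L₃ L₄ = 0)

/-- `(X, Y)` is a frame for the Lagrangian plane `L`: the map `u ↦ (Xu, Yu)` is
injective with range `L`. -/
def IsFrame {n : ℕ} (L : Submodule ℂ (SympSpace n))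
    (X Y : Matrix (Fin n) (Fin n) ℂ) : Prop :=
  Function.Injective (X.mulVecLin.prod Y.mulVecLin) ∧
    LinearMap.range (X.mulVecLin.prod Y.mulVecLin) = L

/-- The shear `(x, y) ↦ (x + εy, y)`. -/
noncomputable def horizShear (n : ℕ) (ε : ℝ) : SympSpace n ≃ₗ[ℂ] SympSpace n where
  toFun u := (u.1 + (ε : ℂ) • u.2, u.2)
  invFun u := (u.1 - (ε : ℂ) • u.2, u.2)
  map_add' u v := by ext <;> simp; ring
  map_smul' c u := by ext <;> simp; ring
  left_inv u := by ext <;> simp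
  right_inv u := by ext <;> simp

/-- The shear `(x, y) ↦ (x, y - Ax)`. -/
noncomputable def vertShear {n : ℕ} (A : Matrix (Fin n) (Fin n) ℂ) :
    SympSpace n ≃ₗ[ℂ] SympSpace n where
  toFun u := (u.1, u.2 - A *ᵥ u.1)
  invFun u := (u.1, u.2 + A *ᵥ u.1)
  map_add' u v := by ext <;> simp [mulVec_add]; ring
  map_smul' c u := by ext <;> simp [mulVec_smul]; ring
  left_inv u := by ext <;> simp
  right_inv u := by ext <;> simp

theorem horizShear_apply {n : ℕ} (ε : ℝ) (u : SympSpace n) :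
    horizShear n ε u = (u.1 + (ε : ℂ) • u.2, u.2) := rfl

theorem vertShear_apply {n : ℕ} (A : Matrix (Fin n) (Fin n) ℂ) (u : SympSpace n) :
    vertShear A u = (u.1, u.2 - A *ᵥ u.1) := rfl

theorem star_mulVec_dotProduct {n : ℕ} (A : Matrix (Fin n) (Fin n) ℂ) (x y : Fin n → ℂ) :
    star (A *ᵥ x) ⬝ᵥ y = star x ⬝ᵥ Aᴴ *ᵥ y := by
  rw [star_mulVec, dotProduct_mulVec]

theorem horizShear_symplectic (n : ℕ) (ε : ℝ) : IsSymplecticMap (horizShear n ε) := by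
  intro u v
  simp only [horizShear_apply, omegaForm, star_add, star_smul, add_dotProduct, dotProduct_add,
    smul_dotProduct, dotProduct_smul, Complex.star_def, Complex.conj_ofReal]
  ring

theorem vertShear_symplectic {n : ℕ} {A : Matrix (Fin n) (Fin n) ℂ} (hA : A.IsHermitian) :
    IsSymplecticMap (vertShear A) := by
  intro u v
  simp only [vertShear_apply, omegaForm, star_sub, sub_dotProduct, dotProduct_sub,
    star_mulVec_dotProduct, hA.eq]
  ring

theorem IsLagrangian.map_symplectic {n : ℕ} {L : Submodule ℂ (SympSpace n)} (hL : IsLagrangian L)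
    {S : SympSpace n ≃ₗ[ℂ] SympSpace n} (hS : IsSymplecticMap S) :
    IsLagrangian (L.map S.toLinearMap) := by
  intro v
  obtain ⟨w, rfl⟩ := S.surjective v
  have h1 : S w ∈ L.map S.toLinearMap ↔ w ∈ L := by simp
  rw [h1, hL w]
  constructor
  · rintro h _ ⟨u, hu, rfl⟩
    exact (hS u w).trans (h u hu)
  · intro h u hu
    exact (hS u w).symm.trans (h _ ⟨u, hu, rfl⟩)

theorem isLagrangian_vertSub (n : ℕ) : IsLagrangian (vertSub n) := by
  rintro ⟨x, y⟩
  simp only [vertSub, Submodule.mem_prod, Submodule.mem_bot, Submodule.mem_top, and_true,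
    omegaForm]
  constructor
  · rintro rfl ⟨a, b⟩ rfl
    simp
  · intro h
    have hx : star x ⬝ᵥ x = 0 := by simpa using h (0, x) rfl
    -- `dotProduct_star_self_eq_zero` needs the order on `ℂ`, which is a scoped instance.
    open ComplexOrder in exact dotProduct_star_self_eq_zero.1 hx

theorem isHermitian_of_isLagrangian_graphOf {n : ℕ} {A : Matrix (Fin n) (Fin n) ℂ}
    (h : IsLagrangian (graphOf A)) : A.IsHermitian := by
  have key : ∀ x y : Fin n → ℂ, star x ⬝ᵥ Aᴴ *ᵥ y = star x ⬝ᵥ A *ᵥ y := by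
    intro x y
    have hmem : ∀ z : Fin n → ℂ, ((z, A *ᵥ z) : SympSpace n) ∈ graphOf A := by
      intro z
      simp [graphOf, LinearMap.mem_graph_iff]
    have := (h (y, A *ᵥ y)).1 (hmem y) (x, A *ᵥ x) (hmem x)
    simp only [omegaForm, star_mulVec_dotProduct] at this
    exact (sub_eq_zero.1 this).symm
  ext i j
  simpa [Pi.star_single] using key (Pi.single i 1) (Pi.single j 1)

theorem map_vertShear_graphOf {n : ℕ} (A B : Matrix (Fin n) (Fin n) ℂ) :
    (graphOf B).map (vertShear A).toLinearMap = graphOf (B - A) := by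
  ext ⟨x, y⟩
  simp only [graphOf, Submodule.mem_map, LinearMap.mem_graph_iff, mulVecLin_apply]
  constructor
  · rintro ⟨u, hu, h⟩
    simp only [LinearEquiv.coe_coe, vertShear_apply, Prod.mk.injEq] at h
    rw [← h.1, ← h.2, hu, sub_mulVec]
  · intro h
    exact ⟨(x, B *ᵥ x), rfl, by simp [vertShear_apply, h, sub_mulVec]⟩

theorem map_vertShear_vertSub {n : ℕ} (A : Matrix (Fin n) (Fin n) ℂ) :
    (vertSub n).map (vertShear A).toLinearMap = vertSub n := by
  ext ⟨x, y⟩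
  simp only [vertSub, Submodule.mem_map, Submodule.mem_prod, Submodule.mem_bot, Submodule.mem_top,
    and_true]
  constructor
  · rintro ⟨u, hu, h⟩
    simp only [LinearEquiv.coe_coe, vertShear_apply, Prod.mk.injEq] at h
    rw [← h.1, hu]
  · intro h
    exact ⟨(x, y), h, by simp [vertShear_apply, h]⟩

/-- The shear by `ε` carries a plane with frame `(X, Y)` to the graph of its Robin map. -/
theorem map_horizShear_frame {n : ℕ} {L : Submodule ℂ (SympSpace n)}
    {X Y : Matrix (Fin n) (Fin n) ℂ} (hF : IsFrame L X Y) {ε : ℝ}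
    (hε : IsUnit (X + (ε : ℂ) • Y)) :
    L.map (horizShear n ε).toLinearMap = graphOf (Y * (X + (ε : ℂ) • Y)⁻¹) := by
  have hdet := (Matrix.isUnit_iff_isUnit_det _).1 hε
  rw [← hF.2]
  ext ⟨x, y⟩
  simp only [graphOf, Submodule.mem_map, LinearMap.mem_graph_iff, mulVecLin_apply,
    LinearMap.mem_range]
  constructor
  · rintro ⟨_, ⟨u, rfl⟩, h⟩
    simp only [LinearEquiv.coe_coe, horizShear_apply, LinearMap.prod_apply, Function.prod,
      mulVecLin_apply, Prod.mk.injEq] at h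
    rw [← h.1, ← h.2, ← smul_mulVec, ← add_mulVec, mulVec_mulVec,
      Matrix.nonsing_inv_mul_cancel_right _ _ hdet]
  · intro h
    refine ⟨_, ⟨(X + (ε : ℂ) • Y)⁻¹ *ᵥ x, rfl⟩, ?_⟩
    simp only [LinearEquiv.coe_coe, horizShear_apply, LinearMap.prod_apply, Function.prod,
      mulVecLin_apply]
    rw [← smul_mulVec, ← add_mulVec, mulVec_mulVec, Matrix.mul_nonsing_inv _ hdet, one_mulVec,
      mulVec_mulVec, h]

theorem dui_graph_graph_vert {n : ℕ} {f : LagGr n → LagGr n → LagGr n → ℤ}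
    (hf : SatisfiesDuiAxioms f) (L₁ L₂ L₃ : LagGr n) {A B : Matrix (Fin n) (Fin n) ℂ}
    (h₁ : L₁.val = graphOf A) (h₂ : L₂.val = graphOf B) (h₃ : L₃.val = vertSub n) :
    f L₁ L₂ L₃ = negIdxM (B - A) := by
  have hA : A.IsHermitian := isHermitian_of_isLagrangian_graphOf (h₁ ▸ L₁.2)
  have hB : B.IsHermitian := isHermitian_of_isLagrangian_graphOf (h₂ ▸ L₂.2)
  have hS := vertShear_symplectic hA
  rw [← hf.2.1 _ hS L₁ L₂ L₃ ⟨_, L₁.2.map_symplectic hS⟩ ⟨_, L₂.2.map_symplectic hS⟩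
    ⟨_, L₃.2.map_symplectic hS⟩ rfl rfl rfl]
  apply hf.1 _ (hB.sub hA)
  · simp only [h₁, map_vertShear_graphOf, sub_self]
  · simp only [h₂, map_vertShear_graphOf]
  · simp only [h₃, map_vertShear_vertSub]

/-- In terms of the ε-Robin maps `Rⱼ^ε = Yⱼ (Xⱼ + εYⱼ)⁻¹` of frames for `L₁, L₂, L₃`,
`f(L₁,L₂,L₃) = n₋(R₂^ε − R₁^ε) − n₋(R₃^ε − R₁^ε) + n₋(R₃^ε − R₂^ε)`. -/
theorem duistermaat_index_via_robin_maps (n : ℕ) (hn : 1 ≤ n)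
    (f : LagGr n → LagGr n → LagGr n → ℤ) (hf : SatisfiesDuiAxioms f)
    (L₁ L₂ L₃ : LagGr n)
    (X₁ Y₁ X₂ Y₂ X₃ Y₃ : Matrix (Fin n) (Fin n) ℂ)
    (hF₁ : IsFrame L₁.val X₁ Y₁) (hF₂ : IsFrame L₂.val X₂ Y₂)
    (hF₃ : IsFrame L₃.val X₃ Y₃) (ε : ℝ)
    (hε₁ : IsUnit (X₁ + (ε : ℂ) • Y₁)) (hε₂ : IsUnit (X₂ + (ε : ℂ) • Y₂))
    (hε₃ : IsUnit (X₃ + (ε : ℂ) • Y₃)) :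
    f L₁ L₂ L₃ =
      (negIdxM (Y₂ * (X₂ + (ε : ℂ) • Y₂)⁻¹ - Y₁ * (X₁ + (ε : ℂ) • Y₁)⁻¹) : ℤ)
      - negIdxM (Y₃ * (X₃ + (ε : ℂ) • Y₃)⁻¹ - Y₁ * (X₁ + (ε : ℂ) • Y₁)⁻¹)
      + negIdxM (Y₃ * (X₃ + (ε : ℂ) • Y₃)⁻¹ - Y₂ * (X₂ + (ε : ℂ) • Y₂)⁻¹) := by
  have hS := horizShear_symplectic n ε
  have hM₁ := map_horizShear_frame hF₁ hε₁
  have hM₂ := map_horizShear_frame hF₂ hε₂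
  have hM₃ := map_horizShear_frame hF₃ hε₃
  rw [← hf.2.1 _ hS L₁ L₂ L₃ ⟨_, L₁.2.map_symplectic hS⟩ ⟨_, L₂.2.map_symplectic hS⟩
    ⟨_, L₃.2.map_symplectic hS⟩ rfl rfl rfl]
  set V : LagGr n := ⟨vertSub n, isLagrangian_vertSub n⟩
  have hc := hf.2.2 ⟨_, L₁.2.map_symplectic hS⟩ ⟨_, L₂.2.map_symplectic hS⟩
    ⟨_, L₃.2.map_symplectic hS⟩ V
  rw [dui_graph_graph_vert hf _ _ V hM₁ hM₂ rfl, dui_graph_graph_vert hf _ _ V hM₁ hM₃ rfl,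
    dui_graph_graph_vert hf _ _ V hM₂ hM₃ rfl] at hc
  linarith
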